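/- Let n ≥ 1 and let H, ρ, G : ℝ → Matrix (Fin n) (Fin n) ℂ be curves such that ρ and G are differentiable, H is twice differentiable, and for all t: ρ'(t) = [H(t), ρ(t)]_*, G'(t) = [H(t), G(t)]_*, and H''(t) = [G(t), ρ(t)]_*. Then H'' is differentiable and H'''(t) = [H(t), H''(t)]_* for all t. (This is the elimination of the costate variables Γ and Π from the Pontryagin Hamiltonian system, yielding the Lie quadratic equation for the optimal Hamiltonian of a quantum spline.) -/

import Mathlib

/-!
By the Leibniz rule, the derivative of `H'' = [G, ρ]_*` is `[G', ρ]_* + [G, ρ']_*`, which the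
equations of motion turn into `[[H, G]_*, ρ]_* + [G, [H, ρ]_*]_*`. The Jacobi identity
identifies this with `[H, [G, ρ]_*]_* = [H, H'']_*`. Everything is done entrywise, so no norm on
matrices is needed.
-/

/-- The Lie bracket `[A,B]_* = -i (AB - BA)` on Hermitian matrices induced by the
identification of `u*(n)` with Hermitian matrices. -/
noncomputable def quantumBracket {n : ℕ} (A B : Matrix (Fin n) (Fin n) ℂ) :
    Matrix (Fin n) (Fin n) ℂ :=
  (-Complex.I) • (A * B - B * A)

/-- The Jacobi identity: `[H, ·]_*` is a derivation of the bracket. -/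
lemma quantumBracket_leibniz {n : ℕ} (H A B : Matrix (Fin n) (Fin n) ℂ) :
    quantumBracket (quantumBracket H A) B + quantumBracket A (quantumBracket H B) =
      quantumBracket H (quantumBracket A B) := by
  simp only [quantumBracket, smul_mul_assoc, mul_smul_comm, ← smul_sub, ← smul_add]
  congr 2
  noncomm_ring

lemma hasDerivAt_mul_apply {n : ℕ} {A B : ℝ → Matrix (Fin n) (Fin n) ℂ}
    {A' B' : Matrix (Fin n) (Fin n) ℂ} {t : ℝ}
    (hA : ∀ i j, HasDerivAt (fun s => A s i j) (A' i j) t)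
    (hB : ∀ i j, HasDerivAt (fun s => B s i j) (B' i j) t) (i j : Fin n) :
    HasDerivAt (fun s => (A s * B s) i j) ((A' * B t + A t * B') i j) t := by
  simp only [Matrix.add_apply, Matrix.mul_apply, ← Finset.sum_add_distrib]
  exact HasDerivAt.fun_sum fun k _ => (hA i k).fun_mul (hB k j)

lemma hasDerivAt_quantumBracket_apply {n : ℕ} {A B : ℝ → Matrix (Fin n) (Fin n) ℂ}
    {A' B' : Matrix (Fin n) (Fin n) ℂ} {t : ℝ}
    (hA : ∀ i j, HasDerivAt (fun s => A s i j) (A' i j) t)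
    (hB : ∀ i j, HasDerivAt (fun s => B s i j) (B' i j) t) (i j : Fin n) :
    HasDerivAt (fun s => quantumBracket (A s) (B s) i j)
      ((quantumBracket A' (B t) + quantumBracket (A t) B') i j) t := by
  have h := ((hasDerivAt_mul_apply hA hB i j).fun_sub
    (hasDerivAt_mul_apply hB hA i j)).const_mul (-Complex.I)
  refine HasDerivAt.congr_deriv h ?_
  simp only [quantumBracket, Matrix.add_apply, Matrix.smul_apply, Matrix.sub_apply, smul_eq_mul]
  ring

theorem stmt_0 (n : ℕ) (hn : 1 ≤ n)
    (H H' H'' ρ ρ' G G' : ℝ → Matrix (Fin n) (Fin n) ℂ)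
    (hH : ∀ t i j, HasDerivAt (fun s => H s i j) (H' t i j) t)
    (hH' : ∀ t i j, HasDerivAt (fun s => H' s i j) (H'' t i j) t)
    (hρ : ∀ t i j, HasDerivAt (fun s => ρ s i j) (ρ' t i j) t)
    (hG : ∀ t i j, HasDerivAt (fun s => G s i j) (G' t i j) t)
    (hρeq : ∀ t, ρ' t = quantumBracket (H t) (ρ t))
    (hGeq : ∀ t, G' t = quantumBracket (H t) (G t))
    (hHeq : ∀ t, H'' t = quantumBracket (G t) (ρ t)) :
    ∀ t i j, HasDerivAt (fun s => H'' s i j)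
      (quantumBracket (H t) (H'' t) i j) t := by
  intro t i j
  have h := hasDerivAt_quantumBracket_apply (hG t) (hρ t) i j
  rw [hGeq, hρeq, quantumBracket_leibniz, ← hHeq] at h
  simpa only [← hHeq] using h
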